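/- The Gaussian curvature of the dihedral Enneper surface of order n is κ(u,v) = (eg − f²)/(EG − F²) = −16n²·u^{2n−2}/(1 + u^{2n})⁴ for all u > 0 and v ∈ ℝ, where E, F, G and e, f, g are the first and second fundamental forms of σⁿ. -/

import Mathlib

noncomputable section
open MeasureTheory Real

/-- Dot product on `ℝ³ = ℝ × ℝ × ℝ`. -/
def dot3 (a b : ℝ × ℝ × ℝ) : ℝ := a.1 * b.1 + a.2.1 * b.2.1 + a.2.2 * b.2.2

/-- Euclidean norm on `ℝ³ = ℝ × ℝ × ℝ`. -/
def norm3 (a : ℝ × ℝ × ℝ) : ℝ := Real.sqrt (dot3 a a)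

/-- Partial derivative in the first (`u`) variable. -/
def pdU {E : Type*} [NormedAddCommGroup E] [NormedSpace ℝ E] (f : ℝ × ℝ → E) (p : ℝ × ℝ) : E :=
  deriv (fun x => f (x, p.2)) p.1

/-- Partial derivative in the second (`v`) variable. -/
def pdV {E : Type*} [NormedAddCommGroup E] [NormedSpace ℝ E] (f : ℝ × ℝ → E) (p : ℝ × ℝ) : E :=
  deriv (fun y => f (p.1, y)) p.2

/-- The dihedral Enneper parametrization `σⁿ` of order `n`. -/
def enneper (n : ℕ) (p : ℝ × ℝ) : ℝ × ℝ × ℝ :=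
  (p.1 * ((2 * (n : ℝ) + 1) * Real.cos p.2 - p.1 ^ (2 * n) * Real.cos ((2 * (n : ℝ) + 1) * p.2))
      / (4 * (n : ℝ) + 2),
   -(p.1 * ((2 * (n : ℝ) + 1) * Real.sin p.2 + p.1 ^ (2 * n) * Real.sin ((2 * (n : ℝ) + 1) * p.2)))
      / (4 * (n : ℝ) + 2),
   p.1 ^ (n + 1) * Real.cos (((n : ℝ) + 1) * p.2) / ((n : ℝ) + 1))

/-- The unit normal `ν` of the dihedral Enneper parametrization of order `n`. -/
def enneperNormal (n : ℕ) (p : ℝ × ℝ) : ℝ × ℝ × ℝ :=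
  (1 + p.1 ^ (2 * n))⁻¹ •
    (2 * p.1 ^ n * Real.cos ((n : ℝ) * p.2),
     2 * p.1 ^ n * Real.sin ((n : ℝ) * p.2),
     p.1 ^ (2 * n) - 1)

theorem pdU_enneper (n : ℕ) : pdU (enneper n) = fun p =>
    ((cos p.2 - p.1 ^ (2 * n) * cos ((2 * (n : ℝ) + 1) * p.2)) / 2,
      -(sin p.2 + p.1 ^ (2 * n) * sin ((2 * (n : ℝ) + 1) * p.2)) / 2,
      p.1 ^ n * cos (((n : ℝ) + 1) * p.2)) := by
  funext ⟨u, v⟩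
  have hk : (2 * (n : ℝ) + 1) ≠ 0 := by positivity
  have hl : (4 * (n : ℝ) + 2) ≠ 0 := by positivity
  have hm : ((n : ℝ) + 1) ≠ 0 := by positivity
  have hq : HasDerivAt (fun x : ℝ => x ^ (2 * n + 1)) ((2 * n + 1) * u ^ (2 * n)) u := by
    simpa using hasDerivAt_pow (2 * n + 1) u
  have hr : HasDerivAt (fun x : ℝ => x ^ (n + 1)) ((n + 1) * u ^ n) u := by
    simpa using hasDerivAt_pow (n + 1) u
  refine HasDerivAt.deriv (HasDerivAt.prodMk ?_ (HasDerivAt.prodMk ?_ ?_))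
  · refine ((((hasDerivAt_id' u).mul_const ((2 * (n : ℝ) + 1) * cos v)).sub
      (hq.mul_const (cos ((2 * (n : ℝ) + 1) * v)))).div_const (4 * (n : ℝ) + 2)).congr_deriv ?_
      |>.congr_of_eventuallyEq (.of_forall fun x => ?_)
    · field_simp
      ring
    · simp only [Pi.sub_apply]
      ring
  · refine ((((hasDerivAt_id' u).mul_const ((2 * (n : ℝ) + 1) * sin v)).add
      (hq.mul_const (sin ((2 * (n : ℝ) + 1) * v)))).neg.div_const (4 * (n : ℝ) + 2)).congr_deriv ?_
      |>.congr_of_eventuallyEq (.of_forall fun x => ?_)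
    · field_simp
      ring
    · simp only [Pi.add_apply, Pi.neg_apply]
      ring
  · refine ((hr.mul_const (cos (((n : ℝ) + 1) * v))).div_const ((n : ℝ) + 1)).congr_deriv ?_
    field_simp

theorem hasDerivAt_cos_const_mul (k v : ℝ) :
    HasDerivAt (fun y => cos (k * y)) (-(k * sin (k * v))) v :=
  ((hasDerivAt_id' v).const_mul k).cos.congr_deriv (by ring)

theorem hasDerivAt_sin_const_mul (k v : ℝ) :
    HasDerivAt (fun y => sin (k * y)) (k * cos (k * v)) v :=
  ((hasDerivAt_id' v).const_mul k).sin.congr_deriv (by ring)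

theorem pdV_enneper (n : ℕ) : pdV (enneper n) = fun p =>
    (p.1 * (-sin p.2 + p.1 ^ (2 * n) * sin ((2 * (n : ℝ) + 1) * p.2)) / 2,
      -(p.1 * (cos p.2 + p.1 ^ (2 * n) * cos ((2 * (n : ℝ) + 1) * p.2))) / 2,
      -(p.1 ^ (n + 1) * sin (((n : ℝ) + 1) * p.2))) := by
  funext ⟨u, v⟩
  have hl : (4 * (n : ℝ) + 2) = 2 * (2 * n + 1) := by ring
  have hk : (2 * (n : ℝ) + 1) ≠ 0 := by positivity
  have hm : ((n : ℝ) + 1) ≠ 0 := by positivity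
  refine HasDerivAt.deriv (HasDerivAt.prodMk ?_ (HasDerivAt.prodMk ?_ ?_))
  · refine (((((hasDerivAt_cos v).const_mul (2 * (n : ℝ) + 1)).sub
      ((hasDerivAt_cos_const_mul (2 * (n : ℝ) + 1) v).const_mul (u ^ (2 * n)))).const_mul u).div_const
        (4 * (n : ℝ) + 2)).congr_deriv ?_
    rw [hl]
    field_simp
    ring
  · refine (((((hasDerivAt_sin v).const_mul (2 * (n : ℝ) + 1)).add
      ((hasDerivAt_sin_const_mul (2 * (n : ℝ) + 1) v).const_mul
        (u ^ (2 * n)))).const_mul u).neg.div_const (4 * (n : ℝ) + 2)).congr_deriv ?_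
    rw [hl]
    field_simp
  · refine (((hasDerivAt_cos_const_mul ((n : ℝ) + 1) v).const_mul (u ^ (n + 1))).div_const
      ((n : ℝ) + 1)).congr_deriv ?_
    field_simp

theorem pdU_pdU_enneper (n : ℕ) (p : ℝ × ℝ) : pdU (pdU (enneper n)) p =
    (-(n * p.1 ^ (2 * n - 1) * cos ((2 * (n : ℝ) + 1) * p.2)),
      -(n * p.1 ^ (2 * n - 1) * sin ((2 * (n : ℝ) + 1) * p.2)),
      n * p.1 ^ (n - 1) * cos (((n : ℝ) + 1) * p.2)) := by
  obtain ⟨u, v⟩ := p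
  rw [pdU_enneper]
  have hq := hasDerivAt_pow (2 * n) u
  refine HasDerivAt.deriv (HasDerivAt.prodMk ?_ (HasDerivAt.prodMk ?_ ?_))
  · refine (((hq.mul_const (cos ((2 * (n : ℝ) + 1) * v))).const_sub (cos v)).div_const
      2).congr_deriv ?_
    push_cast
    ring
  · refine (((hq.mul_const (sin ((2 * (n : ℝ) + 1) * v))).const_add (sin v)).neg.div_const
      2).congr_deriv ?_
    push_cast
    ring
  · exact (hasDerivAt_pow n u).mul_const (cos (((n : ℝ) + 1) * v))

theorem pdV_pdU_enneper (n : ℕ) (p : ℝ × ℝ) : pdV (pdU (enneper n)) p =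
    ((-sin p.2 + (2 * n + 1) * p.1 ^ (2 * n) * sin ((2 * (n : ℝ) + 1) * p.2)) / 2,
      -(cos p.2 + (2 * n + 1) * p.1 ^ (2 * n) * cos ((2 * (n : ℝ) + 1) * p.2)) / 2,
      -((n + 1) * p.1 ^ n * sin (((n : ℝ) + 1) * p.2))) := by
  obtain ⟨u, v⟩ := p
  rw [pdU_enneper]
  refine HasDerivAt.deriv (HasDerivAt.prodMk ?_ (HasDerivAt.prodMk ?_ ?_))
  · refine (((hasDerivAt_cos v).sub ((hasDerivAt_cos_const_mul (2 * (n : ℝ) + 1) v).const_mul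
      (u ^ (2 * n)))).div_const 2).congr_deriv ?_
    ring
  · refine (((hasDerivAt_sin v).add ((hasDerivAt_sin_const_mul (2 * (n : ℝ) + 1) v).const_mul
      (u ^ (2 * n)))).neg.div_const 2).congr_deriv ?_
    ring
  · refine ((hasDerivAt_cos_const_mul ((n : ℝ) + 1) v).const_mul (u ^ n)).congr_deriv ?_
    ring

theorem pdV_pdV_enneper (n : ℕ) (p : ℝ × ℝ) : pdV (pdV (enneper n)) p =
    (p.1 * (-cos p.2 + (2 * n + 1) * p.1 ^ (2 * n) * cos ((2 * (n : ℝ) + 1) * p.2)) / 2,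
      p.1 * (sin p.2 + (2 * n + 1) * p.1 ^ (2 * n) * sin ((2 * (n : ℝ) + 1) * p.2)) / 2,
      -((n + 1) * p.1 ^ (n + 1) * cos (((n : ℝ) + 1) * p.2))) := by
  obtain ⟨u, v⟩ := p
  rw [pdV_enneper]
  refine HasDerivAt.deriv (HasDerivAt.prodMk ?_ (HasDerivAt.prodMk ?_ ?_))
  · refine ((((hasDerivAt_sin v).neg.add ((hasDerivAt_sin_const_mul (2 * (n : ℝ) + 1) v).const_mul
      (u ^ (2 * n)))).const_mul u).div_const 2).congr_deriv ?_
    ring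
  · refine ((((hasDerivAt_cos v).add ((hasDerivAt_cos_const_mul (2 * (n : ℝ) + 1) v).const_mul
      (u ^ (2 * n)))).const_mul u).neg.div_const 2).congr_deriv ?_
    ring
  · refine ((hasDerivAt_sin_const_mul ((n : ℝ) + 1) v).const_mul
      (u ^ (n + 1))).neg.congr_deriv ?_
    ring

theorem dot3_smul_right (c : ℝ) (a b : ℝ × ℝ × ℝ) : dot3 a (c • b) = c * dot3 a b := by
  simp only [dot3, Prod.smul_fst, Prod.smul_snd, smul_eq_mul]
  ring

/-- the Gaussian curvature of the dihedral Enneper surface of order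
`n ≥ 1` is `κ = (eg − f²)/(EG − F²) = −16n²·u^{2n−2}/(1 + u^{2n})⁴` for all `u > 0` and
`v ∈ ℝ`, where `E, F, G` and `e, f, g` are the first and second fundamental forms. -/
theorem enneper_gaussCurvature (n : ℕ) (hn : 1 ≤ n) :
    ∀ p : ℝ × ℝ, 0 < p.1 →
      (dot3 (pdU (pdU (enneper n)) p) (enneperNormal n p)
          * dot3 (pdV (pdV (enneper n)) p) (enneperNormal n p)
        - dot3 (pdV (pdU (enneper n)) p) (enneperNormal n p) ^ 2) /
      (dot3 (pdU (enneper n) p) (pdU (enneper n) p)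
          * dot3 (pdV (enneper n) p) (pdV (enneper n) p)
        - dot3 (pdU (enneper n) p) (pdV (enneper n) p) ^ 2)
        = -16 * (n : ℝ) ^ 2 * p.1 ^ (2 * n - 2) / (1 + p.1 ^ (2 * n)) ^ 4 := by
  rintro ⟨u, v⟩ hu
  obtain ⟨m, rfl⟩ : ∃ m, n = m + 1 := ⟨n - 1, by omega⟩
  replace hu : 0 < u := hu
  simp only [pdU_pdU_enneper, pdV_pdU_enneper, pdV_pdV_enneper]
  simp only [pdU_enneper, pdV_enneper, enneperNormal, dot3_smul_right]
  have e₁ : 2 * (m + 1) - 1 = 2 * m + 1 := by omega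
  have e₂ : 2 * (m + 1) - 2 = 2 * m := by omega
  simp only [e₁, e₂, Nat.add_sub_cancel, dot3]
  set N : ℝ := ((m + 1 : ℕ) : ℝ) with hN
  have hv : v = (N + 1) * v - N * v := by ring
  have hw : (2 * N + 1) * v = (N + 1) * v + N * v := by ring
  have hcv : cos v = cos ((N + 1) * v) * cos (N * v) + sin ((N + 1) * v) * sin (N * v) := by
    rw [← cos_sub, ← hv]
  have hsv : sin v = sin ((N + 1) * v) * cos (N * v) - cos ((N + 1) * v) * sin (N * v) := by
    rw [← sin_sub, ← hv]
  rw [hcv, hsv, hw, cos_add, sin_add]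
  have ha := sin_sq_add_cos_sq (N * v)
  have hb := sin_sq_add_cos_sq ((N + 1) * v)
  generalize cos (N * v) = c at *
  generalize sin (N * v) = s at *
  generalize cos ((N + 1) * v) = C at *
  generalize sin ((N + 1) * v) = S at *
  have p₁ : u ^ (2 * (m + 1)) = (u ^ m * u) ^ 2 := by ring
  have p₂ : u ^ (2 * m + 1) = (u ^ m) ^ 2 * u := by ring
  have p₃ : u ^ (m + 1 + 1) = u ^ m * u ^ 2 := by ring
  have p₄ : u ^ (2 * m) = (u ^ m) ^ 2 := by ring
  rw [p₁, p₂, p₃, p₄, pow_succ u m]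
  have ht : 0 < u ^ m := by positivity
  generalize u ^ m = t at *
  have key : ∀ e f g E F G : ℝ, e = -(N * t * C * (1 + (t * u) ^ 2)) →
      g = N * t * u ^ 2 * C * (1 + (t * u) ^ 2) → f = N * (t * u) * S * (1 + (t * u) ^ 2) →
      E = (1 + (t * u) ^ 2) ^ 2 / 4 → G = u ^ 2 * (1 + (t * u) ^ 2) ^ 2 / 4 → F = 0 →
      ((1 + (t * u) ^ 2)⁻¹ * e * ((1 + (t * u) ^ 2)⁻¹ * g) - ((1 + (t * u) ^ 2)⁻¹ * f) ^ 2) /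
        (E * G - F ^ 2) = -16 * N ^ 2 * t ^ 2 / (1 + (t * u) ^ 2) ^ 4 := by
    rintro _ _ _ _ _ _ rfl rfl rfl rfl rfl rfl
    have hd : 1 + (t * u) ^ 2 ≠ 0 := by positivity
    generalize 1 + (t * u) ^ 2 = d at *
    have hnum : d⁻¹ * -(N * t * C * d) * (d⁻¹ * (N * t * u ^ 2 * C * d)) -
        (d⁻¹ * (N * (t * u) * S * d)) ^ 2 = -(N ^ 2 * t ^ 2 * u ^ 2) := by
      field_simp
      linear_combination -(N ^ 2) * hb
    rw [hnum]
    field_simp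
    ring
  apply key
  · linear_combination (-(N * t ^ 2 * u) * (2 * t * u) * C) * ha
  · linear_combination (u * (t * u) * (-C + (2 * N + 1) * (t * u) ^ 2 * C)) * ha
  · linear_combination (t * u * (-S + (2 * N + 1) * (t * u) ^ 2 * S)) * ha
  · linear_combination ((1 + (t * u) ^ 4) / 4 * (C ^ 2 + S ^ 2) -
      (t * u) ^ 2 / 2 * (C ^ 2 - S ^ 2)) * ha + ((1 + (t * u) ^ 4) / 4 + (t * u) ^ 2 / 2) * hb
  · linear_combination u ^ 2 * (((1 + (t * u) ^ 4) / 4 * (C ^ 2 + S ^ 2) +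
      (t * u) ^ 2 / 2 * (C ^ 2 - S ^ 2)) * ha + ((1 + (t * u) ^ 4) / 4 + (t * u) ^ 2 / 2) * hb)
  · linear_combination (u * (t * u) ^ 2 * S * C) * ha
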